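/- Let ρ, F be C¹ on a ball B_r ⊂ ℝ³ (ρ scalar, F matrix-valued), with div(ρFᵀ) = 0, and suppose ρ(F − I) and ρ(F−I)(F−I)ᵀ vanish near ∂B_r. Then ∫_{B_r} x · div(ρ F Fᵀ) dx = −∫_{B_r} ρ|F−I|² dx − ∫_{B_r} ρ tr(F−I) dx. -/

import Mathlib

/-!
Since `F Fᵀ = F (F - 1)ᵀ + F` and `ρ F` is divergence free, `div (ρ F Fᵀ) = div (ρ F (F - 1)ᵀ)`, and
the field `ρ F (F - 1)ᵀ` inherits the compact support of `ρ (F - 1)`. Integrating by parts against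
the position field, whose Jacobian is the identity, leaves minus the integral of
`ρ tr (F (F - 1)ᵀ) = ρ |F - 1|² + ρ tr (F - 1)`.
-/

open MeasureTheory Metric

open Function
open scoped Matrix

section IntegrationByParts

variable {E : Type*} [NormedAddCommGroup E] [NormedSpace ℝ E]

lemma contDiff_of_contDiffAt_of_tsupport_subset {F : Type*} [NormedAddCommGroup F]
    [NormedSpace ℝ F] {f : E → F} {n : WithTop ℕ∞} {s : Set E}
    (hf : ∀ x ∈ s, ContDiffAt ℝ n f x) (hs : tsupport f ⊆ s) : ContDiff ℝ n f :=
  contDiff_iff_contDiffAt.2 fun x => by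
    by_cases hx : x ∈ tsupport f
    · exact hf x (hs hx)
    · exact contDiffAt_const.congr_of_eventuallyEq (notMem_tsupport_iff_eventuallyEq.1 hx)

variable [MeasurableSpace E] [BorelSpace E] {μ : Measure E} {f g : E → ℝ}

lemma integrable_mul_fderiv_of_hasCompactSupport [IsFiniteMeasureOnCompacts μ]
    (hg : Continuous g) (hf : ContDiff ℝ 1 f) (hc : HasCompactSupport f) (v : E) :
    Integrable (fun x => g x * fderiv ℝ f x v) μ :=
  (hg.mul ((hf.continuous_fderiv one_ne_zero).clm_apply continuous_const))
    |>.integrable_of_hasCompactSupport (hc.fderiv_apply (𝕜 := ℝ) v).mul_left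

lemma integrable_fderiv_mul_of_hasCompactSupport [IsFiniteMeasureOnCompacts μ]
    (hg : ContDiff ℝ 1 g) (hf : Continuous f) (hc : HasCompactSupport f) (v : E) :
    Integrable (fun x => fderiv ℝ g x v * f x) μ :=
  (((hg.continuous_fderiv one_ne_zero).clm_apply continuous_const).mul hf)
    |>.integrable_of_hasCompactSupport hc.mul_left

lemma integral_mul_fderiv_of_hasCompactSupport [FiniteDimensional ℝ E] [μ.IsAddHaarMeasure]
    (hg : ContDiff ℝ 1 g) (hf : ContDiff ℝ 1 f) (hc : HasCompactSupport f) (v : E) :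
    ∫ x, g x * fderiv ℝ f x v ∂μ = -∫ x, fderiv ℝ g x v * f x ∂μ :=
  integral_mul_fderiv_eq_neg_fderiv_mul_of_integrable
    (integrable_fderiv_mul_of_hasCompactSupport hg hf.continuous hc v)
    (integrable_mul_fderiv_of_hasCompactSupport hg.continuous hf hc v)
    ((hg.continuous.mul hf.continuous).integrable_of_hasCompactSupport hc.mul_left)
    (fun x _ => hg.differentiable one_ne_zero x) (fun x _ => hf.differentiable one_ne_zero x)

end IntegrationByParts

section MatrixAlgebra

variable {ι R : Type*} [Fintype ι] [DecidableEq ι]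

lemma mul_transpose_eq_mul_sub_one_transpose_add [Ring R] (F : Matrix ι ι R) :
    F * Fᵀ = F * (F - 1)ᵀ + F := by
  simp [mul_sub]

lemma trace_mul_sub_one_transpose [CommRing R] (F : Matrix ι ι R) :
    (F * (F - 1)ᵀ).trace = ∑ i, ∑ j, (F - 1) i j ^ 2 + (F - 1).trace := by
  have hsplit : F * (F - 1)ᵀ = (F - 1) * (F - 1)ᵀ + (F - 1)ᵀ := by noncomm_ring
  have hsq : ((F - 1) * (F - 1)ᵀ).trace = ∑ i, ∑ j, (F - 1) i j ^ 2 := by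
    simp only [Matrix.trace, Matrix.diag_apply, Matrix.mul_apply, Matrix.transpose_apply, sq]
  rw [hsplit, Matrix.trace_add, hsq, Matrix.trace_transpose]

end MatrixAlgebra

section MatrixField

variable {X ι κ R : Type*}

lemma support_smul_mul_transpose_subset [Fintype ι] [CommSemiring R] (ρ : X → R)
    (F G : X → Matrix κ ι R) :
    support (fun x => ρ x • (F x * (G x)ᵀ)) ⊆ support fun x => ρ x • G x :=
  support_subset_iff'.2 fun x hx => by
    rw [← Matrix.mul_smul, ← Matrix.transpose_smul, notMem_support.1 hx, Matrix.transpose_zero,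
      Matrix.mul_zero]

lemma tsupport_matrix_entry_subset [TopologicalSpace X] [Zero R] (A : X → Matrix κ ι R)
    (i : κ) (j : ι) : tsupport (fun x => A x i j) ⊆ tsupport A :=
  tsupport_comp_subset (g := fun M : Matrix κ ι R => M i j) rfl A

lemma hasCompactSupport_matrix_entry [TopologicalSpace X] [Zero R] {A : X → Matrix κ ι R}
    (hA : HasCompactSupport A) (i : κ) (j : ι) : HasCompactSupport fun x => A x i j :=
  hA.comp_left (g := fun M : Matrix κ ι R => M i j) rfl

variable [Fintype ι] [MeasurableSpace X] {μ : Measure X}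

lemma integrable_trace_of_hasCompactSupport [TopologicalSpace X] [OpensMeasurableSpace X]
    [IsFiniteMeasureOnCompacts μ] [NormedAddCommGroup R] {A : X → Matrix ι ι R}
    (hA : ∀ i j, Continuous fun x => A x i j) (hc : HasCompactSupport A) :
    Integrable (fun x => (A x).trace) μ :=
  integrable_finsetSum _ fun i _ =>
    (hA i i).integrable_of_hasCompactSupport (hasCompactSupport_matrix_entry hc i i)

lemma integral_trace_smul_mul_sub_one_transpose [DecidableEq ι] {ρ : X → ℝ}
    {F : X → Matrix ι ι ℝ}
    (hquad : Integrable (fun x => (ρ x • (F x * (F x - 1)ᵀ)).trace) μ)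
    (hlin : Integrable (fun x => (ρ x • (F x - 1)).trace) μ) :
    ∫ x, (ρ x • (F x * (F x - 1)ᵀ)).trace ∂μ =
      ∫ x, ρ x * ∑ i, ∑ j, (F x - 1) i j ^ 2 ∂μ + ∫ x, ρ x * (F x - 1).trace ∂μ := by
  simp only [Matrix.trace_smul, trace_mul_sub_one_transpose, smul_eq_mul, mul_add] at hquad hlin ⊢
  exact integral_add ((hquad.sub hlin).congr (.of_forall fun x => add_sub_cancel_right _ _)) hlin

end MatrixField

section Divergence

lemma fderiv_coord_single {ι : Type*} [Finite ι] [DecidableEq ι] (x : EuclideanSpace ℝ ι)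
    (i j : ι) :
    fderiv ℝ (fun y : EuclideanSpace ℝ ι => y i) x (EuclideanSpace.single j 1) =
      (1 : Matrix ι ι ℝ) i j := by
  have := Fintype.ofFinite ι
  have hcoord : fderiv ℝ (fun y : EuclideanSpace ℝ ι => y i) x = EuclideanSpace.proj i :=
    (EuclideanSpace.proj i : EuclideanSpace ℝ ι →L[ℝ] ℝ).fderiv
  simp [hcoord, Matrix.one_apply]

variable {ι κ : Type*} [Fintype ι] [DecidableEq ι]

/-- The row-wise divergence `(div A)ᵢ = ∑ⱼ ∂ⱼ Aᵢⱼ` of a matrix field `A`, which need not be square.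
Entries that are not differentiable at `x` contribute `0`. -/
noncomputable def rowDiv (A : EuclideanSpace ℝ ι → Matrix κ ι ℝ) (x : EuclideanSpace ℝ ι) (i : κ) :
    ℝ :=
  ∑ j, fderiv ℝ (fun y => A y i j) x (EuclideanSpace.single j 1)

lemma rowDiv_add {A B : EuclideanSpace ℝ ι → Matrix κ ι ℝ} {x : EuclideanSpace ℝ ι}
    (hA : ∀ i j, DifferentiableAt ℝ (fun y => A y i j) x)
    (hB : ∀ i j, DifferentiableAt ℝ (fun y => B y i j) x) :
    rowDiv (fun y => A y + B y) x = rowDiv A x + rowDiv B x := by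
  funext i
  simp only [rowDiv, Pi.add_apply, Matrix.add_apply, ← Finset.sum_add_distrib]
  refine Finset.sum_congr rfl fun j _ => ?_
  rw [fderiv_fun_add (hA i j) (hB i j), add_apply]

lemma rowDiv_of_notMem_tsupport {A : EuclideanSpace ℝ ι → Matrix κ ι ℝ}
    {x : EuclideanSpace ℝ ι} (hx : x ∉ tsupport A) : rowDiv A x = 0 := by
  funext i
  refine Finset.sum_eq_zero fun j _ => ?_
  rw [fderiv_of_notMem_tsupport ℝ fun h => hx (tsupport_matrix_entry_subset A i j h),
    zero_apply]

lemma rowDiv_smul_mul_transpose {ρ : EuclideanSpace ℝ ι → ℝ} {F : EuclideanSpace ℝ ι → Matrix ι ι ℝ}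
    {x : EuclideanSpace ℝ ι} (hρ : DifferentiableAt ℝ ρ x)
    (hF : ∀ i j, DifferentiableAt ℝ (fun y => F y i j) x)
    (hdiv : rowDiv (fun y => ρ y • F y) x = 0) :
    rowDiv (fun y => ρ y • (F y * (F y)ᵀ)) x = rowDiv (fun y => ρ y • (F y * (F y - 1)ᵀ)) x := by
  have hsplit (y : EuclideanSpace ℝ ι) :
      ρ y • (F y * (F y)ᵀ) = ρ y • (F y * (F y - 1)ᵀ) + ρ y • F y := by
    rw [mul_transpose_eq_mul_sub_one_transpose_add, smul_add]
  simp only [hsplit]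
  rw [rowDiv_add, hdiv, add_zero]
  · intro i j
    simp only [Matrix.smul_apply, Matrix.mul_apply, Matrix.transpose_apply, Matrix.sub_apply,
      smul_eq_mul]
    fun_prop
  · exact fun i j => hρ.mul (hF i j)

lemma integral_sum_mul_rowDiv [Fintype κ] {v : EuclideanSpace ℝ ι → κ → ℝ}
    {A : EuclideanSpace ℝ ι → Matrix κ ι ℝ} (hv : ∀ i, ContDiff ℝ 1 fun x => v x i)
    (hA : ∀ i j, ContDiff ℝ 1 fun x => A x i j) (hc : HasCompactSupport A) :
    ∫ x, ∑ i, v x i * rowDiv A x i =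
      -∫ x, ∑ i, ∑ j, fderiv ℝ (fun y => v y i) x (EuclideanSpace.single j 1) * A x i j := by
  have hcij := hasCompactSupport_matrix_entry hc
  have hright (i : κ) (j : ι) := integrable_mul_fderiv_of_hasCompactSupport (μ := volume)
    (hv i).continuous (hA i j) (hcij i j) (EuclideanSpace.single j 1)
  have hleft (i : κ) (j : ι) := integrable_fderiv_mul_of_hasCompactSupport (μ := volume)
    (hv i) (hA i j).continuous (hcij i j) (EuclideanSpace.single j 1)
  simp only [rowDiv, Finset.mul_sum]
  rw [integral_finsetSum _ fun i _ => integrable_finsetSum _ fun j _ => hright i j,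
    integral_finsetSum _ fun i _ => integrable_finsetSum _ fun j _ => hleft i j,
    ← Finset.sum_neg_distrib]
  refine Finset.sum_congr rfl fun i _ => ?_
  rw [integral_finsetSum _ fun j _ => hright i j, integral_finsetSum _ fun j _ => hleft i j,
    ← Finset.sum_neg_distrib]
  exact Finset.sum_congr rfl fun j _ =>
    integral_mul_fderiv_of_hasCompactSupport (hv i) (hA i j) (hcij i j) _

lemma setIntegral_sum_coord_mul_rowDiv {A : EuclideanSpace ℝ ι → Matrix ι ι ℝ}
    {s : Set (EuclideanSpace ℝ ι)} (hA : ∀ i j, ContDiff ℝ 1 fun x => A x i j)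
    (hc : HasCompactSupport A) (hs : tsupport A ⊆ s) :
    ∫ x in s, ∑ i, x i * rowDiv A x i = -∫ x in s, (A x).trace := by
  rw [setIntegral_eq_integral_of_forall_compl_eq_zero fun x hx => by
      simp [rowDiv_of_notMem_tsupport fun h => hx (hs h)],
    setIntegral_eq_integral_of_forall_compl_eq_zero fun x hx => by
      simp [image_eq_zero_of_notMem_tsupport fun h => hx (hs h)],
    integral_sum_mul_rowDiv (fun i => by fun_prop) hA hc]
  simp [fderiv_coord_single, Matrix.one_apply, Matrix.trace]

theorem ball_divergence_identity_general {s : Set (EuclideanSpace ℝ ι)} (hs : MeasurableSet s)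
    {ρ : EuclideanSpace ℝ ι → ℝ} {F : EuclideanSpace ℝ ι → Matrix ι ι ℝ}
    (hρ : ∀ x ∈ s, ContDiffAt ℝ 1 ρ x)
    (hF : ∀ x ∈ s, ∀ i j, ContDiffAt ℝ 1 (fun y => F y i j) x)
    (hdiv : ∀ x ∈ s, rowDiv (fun y => ρ y • F y) x = 0)
    (hc : HasCompactSupport fun x => ρ x • (F x - 1))
    (hsupp : tsupport (fun x => ρ x • (F x - 1)) ⊆ s) :
    ∫ x in s, ∑ i, x i * rowDiv (fun y => ρ y • (F y * (F y)ᵀ)) x i =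
      -(∫ x in s, ρ x * ∑ i, ∑ j, (F x - 1) i j ^ 2) - ∫ x in s, ρ x * (F x - 1).trace := by
  set A : EuclideanSpace ℝ ι → Matrix ι ι ℝ := fun x => ρ x • (F x * (F x - 1)ᵀ) with hA_def
  set B : EuclideanSpace ℝ ι → Matrix ι ι ℝ := fun x => ρ x • (F x - 1)
  have hAB : support A ⊆ support B := support_smul_mul_transpose_subset ρ F fun x => F x - 1
  have hAc : HasCompactSupport A := hc.mono hAB
  have hAs : tsupport A ⊆ s := (closure_mono hAB).trans hsupp
  have hG (x) (hx : x ∈ s) (i j : ι) : ContDiffAt ℝ 1 (fun y => (F y - 1) i j) x :=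
    (hF x hx i j).sub contDiffAt_const
  have hB (i j : ι) : ContDiff ℝ 1 fun x => B x i j :=
    contDiff_of_contDiffAt_of_tsupport_subset (fun x hx => (hρ x hx).mul (hG x hx i j))
      ((tsupport_matrix_entry_subset B i j).trans hsupp)
  have hA (i j : ι) : ContDiff ℝ 1 fun x => A x i j :=
    contDiff_of_contDiffAt_of_tsupport_subset
      (fun x hx => (hρ x hx).mul (ContDiffAt.sum fun k _ => (hF x hx i k).mul (hG x hx j k)))
      ((tsupport_matrix_entry_subset A i j).trans hAs)
  have hdivA : Set.EqOn (fun x => ∑ i, x i * rowDiv (fun y => ρ y • (F y * (F y)ᵀ)) x i)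
      (fun x => ∑ i, x i * rowDiv A x i) s := fun x hx => by
    simp only [rowDiv_smul_mul_transpose ((hρ x hx).differentiableAt one_ne_zero)
      (fun i j => (hF x hx i j).differentiableAt one_ne_zero) (hdiv x hx), hA_def]
  have htrA : Integrable fun x => (A x).trace :=
    integrable_trace_of_hasCompactSupport (fun i j => (hA i j).continuous) hAc
  have htrB : Integrable fun x => (B x).trace :=
    integrable_trace_of_hasCompactSupport (fun i j => (hB i j).continuous) hc
  calc ∫ x in s, ∑ i, x i * rowDiv (fun y => ρ y • (F y * (F y)ᵀ)) x i
    _ = ∫ x in s, ∑ i, x i * rowDiv A x i := setIntegral_congr_fun hs hdivA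
    _ = -∫ x in s, (A x).trace := setIntegral_sum_coord_mul_rowDiv hA hAc hAs
    _ = -(∫ x in s, ρ x * ∑ i, ∑ j, (F x - 1) i j ^ 2) - ∫ x in s, ρ x * (F x - 1).trace := by
      rw [integral_trace_smul_mul_sub_one_transpose htrA.restrict htrB.restrict, neg_add']

end Divergence

/-- Key integration-by-parts identity on the ball `B_r`:
`∫_{B_r} x · div(ρFFᵀ) dx = −∫_{B_r} ρ|F−I|² dx − ∫_{B_r} ρ tr(F−I) dx`,
assuming `div(ρFᵀ) = 0` and that `ρ(F−I)` vanishes near `∂B_r`. -/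
theorem ball_divergence_identity (r : ℝ) (hr : 0 < r)
    (ρ : EuclideanSpace ℝ (Fin 3) → ℝ)
    (F : EuclideanSpace ℝ (Fin 3) → (Fin 3 → Fin 3 → ℝ))
    (hρ : ContDiff ℝ 1 ρ) (hF : ContDiff ℝ 1 F)
    (hdiv : ∀ x ∈ closedBall (0 : EuclideanSpace ℝ (Fin 3)) r, ∀ k,
      ∑ j, fderiv ℝ (fun y => ρ y * F y k j) x (EuclideanSpace.single j 1) = 0)
    (hsupp : ∃ r' < r, ∀ x : EuclideanSpace ℝ (Fin 3), r' ≤ ‖x‖ →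
      ∀ i j, ρ x * (F x i j - if i = j then 1 else 0) = 0) :
    ∫ x in closedBall (0 : EuclideanSpace ℝ (Fin 3)) r,
        ∑ i, x i * ∑ j,
          fderiv ℝ (fun y => ρ y * ∑ k, F y i k * F y j k) x (EuclideanSpace.single j 1) =
      -(∫ x in closedBall (0 : EuclideanSpace ℝ (Fin 3)) r,
          ρ x * ∑ i, ∑ j, (F x i j - if i = j then 1 else 0) ^ 2) -
        ∫ x in closedBall (0 : EuclideanSpace ℝ (Fin 3)) r,
          ρ x * ∑ i, (F x i i - 1) := by
  obtain ⟨r', hr', hsupp⟩ := hsupp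
  have hzero : ∀ x ∉ closedBall (0 : EuclideanSpace ℝ (Fin 3)) r,
      ρ x • (Matrix.of (F x) - 1) = 0 := fun x hx => by
    ext i j
    simpa [Matrix.one_apply] using
      hsupp x (hr'.trans (not_le.1 (mt mem_closedBall_zero_iff.2 hx))).le i j
  have hident := ball_divergence_identity_general (F := fun x => .of (F x)) measurableSet_closedBall
    (fun x _ => hρ.contDiffAt)
    (fun x _ i j => (contDiff_pi.1 (contDiff_pi.1 hF i) j).contDiffAt)
    (fun x hx => funext (hdiv x hx)) (.intro (isCompact_closedBall 0 r) hzero)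
    (closure_minimal (support_subset_iff'.2 hzero) isClosed_closedBall)
  simpa [rowDiv, Matrix.mul_apply, Matrix.one_apply, Matrix.trace, -Finset.sum_sub_distrib]
    using hident
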